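/- For every n ≥ 1: the word s_n · D_n is a prefix of 𝐬 and also a prefix of the periodic word s_n^ω; moreover every finite word that is a prefix of both 𝐬 and s_n^ω has length at most |s_n| + |D_n|. (Hence the prefix index of s_n in 𝐬 equals (|s_n| + |D_n|)/|s_n|, which is 1 + d_{n+1} + |D_{n-k}|/|s_n| for n ≥ k.) -/

import Mathlib

/-!
Write `E n = s_{n-1}^{d_n} ⋯ s_0^{d_1}`, so that `E (n+1) = s_n D_n`. Two identities drive the proof:
`s_n = E n · x` with `x = a_{n+1}` for `n < k`, and `E n = s_n D_{n-k}` for `n ≥ k`.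

By strong induction (`D_letter`), `D_n` followed by the letter `x_n := a_{(n mod k)+1}` is a prefix
of `s_{n+1}`: for `n ≥ k` one has `D_n = s_n^{d_{n+1}-1} s_n D_{n-k}`, where `D_{n-k} x_n` is a prefix
of `s_{n-k+1}`, hence of `s_{n-1}`, and `s_{n+1}` begins with `s_n^{d_{n+1}} s_{n-1}`. The same
argument (`E_letter`) shows that `E n · x_n` is a prefix of `s_{n+1}`.

Hence `s_n D_n = E (n+1)` is a prefix of `𝐬`, followed there by `x_{n+1}`, whereas `D_n` is followed
in `𝐬` by `x_n`. Since `x_n ≠ x_{n+1}`, the period `|s_n|` breaks exactly at position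
`|s_n| + |D_n|`, which bounds the common prefixes of `𝐬` and `s_n^ω`.
-/

namespace Epi

variable {α : Type*}

/-- `pw w p` is the `p`-fold concatenation `w^p`. -/
def pw (w : List α) : ℕ → List α
  | 0 => []
  | p + 1 => w ++ pw w p

/-- `S k a d m` is the word `s_{m-(k-1)}` of the paper (shifted indexing: `m : ℕ`
ranges over the indices `n ≥ 1-k`). -/
def S (k : ℕ) (a : ℕ → α) (d : ℕ → ℕ) : ℕ → List α
  | m =>
    if h : m < max k 1 then [a ((m + 1) % k + 1)]
    else
      ((List.range (k - 1)).map
          (fun j => pw (S k a d (m - 1 - j)) (d (m + 1 - k - j)))).flatten ++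
        S k a d (m - max k 1)
  termination_by m => m
  decreasing_by all_goals omega

/-- `s k a d n` is the word `s_n`, for `n ≥ 0`. -/
def s (k : ℕ) (a : ℕ → α) (d : ℕ → ℕ) (n : ℕ) : List α :=
  S k a d (n + (k - 1))

/-- `D k a d n` is the word `D_n = s_n^{d_{n+1}-1} s_{n-1}^{d_n} ⋯ s_1^{d_2} s_0^{d_1}`. -/
def D (k : ℕ) (a : ℕ → α) (d : ℕ → ℕ) (n : ℕ) : List α :=
  pw (s k a d n) (d (n + 1) - 1) ++
    ((List.range n).map (fun j => pw (s k a d (n - 1 - j)) (d (n - j)))).flatten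

/-- `G k a d n r` is the word `G_{n,r}`: `s_n` with its prefix of length `|D_{n-r}|` removed. -/
def G (k : ℕ) (a : ℕ → α) (d : ℕ → ℕ) (n r : ℕ) : List α :=
  (s k a d n).drop (D k a d (n - r)).length

/-- `Om k a d n r` is the set `Ω_n^r` of singular `n`-words of the `r`-th kind. -/
def Om (k : ℕ) (a : ℕ → α) (d : ℕ → ℕ) (n r : ℕ) : Set (List α) :=
  { w | w.length = (s k a d n).length ∧
      w <:+:
        ((((G k a d n r).reverse ++ D k a d (n - r) ++ G k a d n r).drop 1).dropLast) }

/-- `w` is a factor of the infinite word `𝐬`. -/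
def FactorS (k : ℕ) (a : ℕ → α) (d : ℕ → ℕ) (w : List α) : Prop :=
  ∃ N, w <:+: s k a d N

/-- `E k a d n` is the word `s_{n-1}^{d_n} s_{n-2}^{d_{n-1}} ⋯ s_0^{d_1}`, which satisfies
`E (n+1) = s_n D_n`. -/
def E (k : ℕ) (a : ℕ → α) (d : ℕ → ℕ) (n : ℕ) : List α :=
  ((List.range n).map (fun j => pw (s k a d (n - 1 - j)) (d (n - j)))).flatten

theorem D_eq (k : ℕ) (a : ℕ → α) (d : ℕ → ℕ) (n : ℕ) :
    D k a d n = pw (s k a d n) (d (n + 1) - 1) ++ E k a d n := rfl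

theorem pw_succ' (w : List α) (p : ℕ) : pw w (p + 1) = pw w p ++ w := by
  induction p with
  | zero => simp [pw]
  | succ p ih => rw [pw, ih, ← List.append_assoc, ← pw, ih]

theorem pw_period (w : List α) (m i : ℕ) (h : i + w.length < (pw w m).length) :
    (pw w m)[i + w.length]? = (pw w m)[i]? := by
  cases m with
  | zero => simp [pw] at h
  | succ m =>
    have h1 : i < (pw w m).length := by
      simp only [pw, List.length_append] at h; omega
    have e1 : (pw w (m + 1))[i + w.length]? = (pw w m)[i]? := by
      rw [pw, List.getElem?_append_right (by omega)]; simp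
    rw [e1, pw_succ', List.getElem?_append_left h1]

theorem E_succ (k : ℕ) (a : ℕ → α) (d : ℕ → ℕ) (n : ℕ) :
    E k a d (n + 1) = pw (s k a d n) (d (n + 1)) ++ E k a d n := by
  unfold E
  rw [List.range_succ_eq_map]
  simp only [List.map_cons, List.map_map, List.flatten_cons]
  congr 2
  apply List.map_congr_left
  intro j _
  simp only [Function.comp]
  rw [show n + 1 - 1 - j.succ = n - 1 - j by omega, show n + 1 - j.succ = n - j by omega]

theorem E_succ_eq (k : ℕ) (a : ℕ → α) (d : ℕ → ℕ) (hd : ∀ i, 1 ≤ i → 1 ≤ d i) (n : ℕ) :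
    E k a d (n + 1) = s k a d n ++ D k a d n := by
  have := hd (n + 1) (by omega)
  obtain ⟨p, hp⟩ : ∃ p, d (n + 1) = p + 1 := ⟨d (n + 1) - 1, by omega⟩
  rw [E_succ, D_eq, hp, pw]
  simp

theorem s_zero (k : ℕ) (hk : 2 ≤ k) (a : ℕ → α) (d : ℕ → ℕ) : s k a d 0 = [a 1] := by
  unfold s
  rw [S, dif_pos (by omega), show 0 + (k - 1) + 1 = k by omega]
  simp

theorem s_unfold (k : ℕ) (hk : 2 ≤ k) (a : ℕ → α) (d : ℕ → ℕ) (n : ℕ) (hn : 1 ≤ n) :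
    s k a d n = ((List.range (k - 1)).map
      (fun j => pw (S k a d (n + (k - 2) - j)) (d (n - j)))).flatten ++ S k a d (n - 1) := by
  unfold s
  rw [S, dif_neg (by omega)]
  congr 2
  · congr 1
    funext j
    rw [show n + (k - 1) - 1 - j = n + (k - 2) - j by omega,
      show n + (k - 1) + 1 - k - j = n - j by omega]
  · rw [show n + (k - 1) - max k 1 = n - 1 by omega]

/-- Over the indices `j < n`, the factors in the recursion for `s_n` are those of `E n`. -/
theorem factors_congr (k : ℕ) (hk : 2 ≤ k) (a : ℕ → α) (d : ℕ → ℕ) (n p : ℕ) (hp : p ≤ n) :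
    (List.range p).map (fun j => pw (S k a d (n + (k - 2) - j)) (d (n - j))) =
      (List.range p).map (fun j => pw (s k a d (n - 1 - j)) (d (n - j))) := by
  apply List.map_congr_left
  intro j hj
  have := List.mem_range.1 hj
  unfold s
  rw [show n + (k - 2) - j = n - 1 - j + (k - 1) by omega]

theorem s_small (k : ℕ) (hk : 2 ≤ k) (a : ℕ → α) (d : ℕ → ℕ) (hd0 : d 0 = 0) (n : ℕ)
    (hn : n < k) : s k a d n = E k a d n ++ [a (n % k + 1)] := by
  rcases Nat.eq_zero_or_pos n with rfl | h1
  · simp [s_zero k hk, E]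
  rw [s_unfold k hk a d n h1]
  congr 1
  · obtain ⟨c, hc⟩ : ∃ c, k - 1 = n + c := ⟨k - 1 - n, by omega⟩
    rw [hc, List.range_add, List.map_append, List.flatten_append,
      factors_congr k hk a d n n le_rfl]
    -- the factors with `j ≥ n` have exponent `d 0 = 0`
    have : (List.map (fun j => pw (S k a d (n + (k - 2) - j)) (d (n - j)))
        (List.map (fun x => n + x) (List.range c))).flatten = [] := by
      simp [List.flatten_eq_nil_iff, hd0, pw]
    rw [this, List.append_nil, E]
  · rw [S, dif_pos (by omega), show n - 1 + 1 = n by omega]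

theorem E_large (k : ℕ) (hk : 2 ≤ k) (a : ℕ → α) (d : ℕ → ℕ)
    (hd : ∀ i, 1 ≤ i → 1 ≤ d i) (n : ℕ)
    (hn : k ≤ n) : E k a d n = s k a d n ++ D k a d (n - k) := by
  rw [s_unfold k hk a d n (by omega), factors_congr k hk a d n (k - 1) (by omega)]
  have e1 : S k a d (n - 1) = s k a d (n - k) := by
    unfold s; rw [show n - 1 = n - k + (k - 1) by omega]
  rw [e1, List.append_assoc, ← E_succ_eq k a d hd]
  unfold E
  conv_lhs => rw [show n = (k - 1) + (n - k + 1) by omega, List.range_add, List.map_append,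
    List.flatten_append]
  rw [show k - 1 + (n - k + 1) = n by omega]
  congr 2
  rw [List.map_map]
  apply List.map_congr_left
  intro j _
  simp only [Function.comp]
  rw [show n - 1 - (k - 1 + j) = n - k + 1 - 1 - j by omega,
    show n - (k - 1 + j) = n - k + 1 - j by omega]

theorem pw_prefix_s_succ (k : ℕ) (hk : 2 ≤ k) (a : ℕ → α) (d : ℕ → ℕ) (n : ℕ) :
    pw (s k a d n) (d (n + 1)) <+: s k a d (n + 1) := by
  rw [s_unfold k hk a d (n + 1) (by omega)]
  obtain ⟨c, rfl⟩ : ∃ c, k = c + 2 := ⟨k - 2, by omega⟩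
  rw [show c + 2 - 1 = c + 1 by omega, List.range_succ_eq_map]
  simp only [List.map_cons, List.flatten_cons, List.append_assoc]
  have e : S (c + 2) a d (n + 1 + (c + 2 - 2) - 0) = s (c + 2) a d n := by
    unfold s; congr 1; omega
  rw [e]
  exact List.prefix_append _ _

theorem pw_append_prefix_s_succ (k : ℕ) (hk : 2 ≤ k) (a : ℕ → α) (d : ℕ → ℕ)
    (hd : ∀ i, 1 ≤ i → 1 ≤ d i) (n : ℕ) (hn : 1 ≤ n) :
    pw (s k a d n) (d (n + 1)) ++ s k a d (n - 1) <+: s k a d (n + 1) := by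
  rw [s_unfold k hk a d (n + 1) (by omega)]
  obtain ⟨c, rfl⟩ : ∃ c, k = c + 2 := ⟨k - 2, by omega⟩
  rw [show c + 2 - 1 = c + 1 by omega, List.range_succ_eq_map]
  simp only [List.map_cons, List.flatten_cons, List.append_assoc]
  have e : S (c + 2) a d (n + 1 + (c + 2 - 2) - 0) = s (c + 2) a d n := by
    unfold s; congr 1; omega
  rw [e]
  refine (List.prefix_append_right_inj _).2 ?_
  cases c with
  | zero =>
    have e2 : S 2 a d (n + 1 - 1) = s 2 a d (n - 1) := by
      unfold s; congr 1; omega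
    simp [← e2]
  | succ c =>
    rw [List.range_succ_eq_map]
    simp only [List.map_cons, List.flatten_cons, List.append_assoc]
    have e2 : S (c + 1 + 2) a d (n + 1 + (c + 1 + 2 - 2) - Nat.succ 0)
        = s (c + 1 + 2) a d (n - 1) := by
      unfold s; congr 1; omega
    rw [e2]
    obtain ⟨p, hp⟩ : ∃ p, d (n + 1 - Nat.succ 0) = p + 1 :=
      ⟨d n - 1, by have := hd n hn; simp; omega⟩
    rw [hp, pw, List.append_assoc]
    exact List.prefix_append _ _

theorem s_prefix_succ (k : ℕ) (hk : 2 ≤ k) (a : ℕ → α) (d : ℕ → ℕ)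
    (hd : ∀ i, 1 ≤ i → 1 ≤ d i) (n : ℕ) : s k a d n <+: s k a d (n + 1) := by
  refine List.IsPrefix.trans ?_ (pw_prefix_s_succ k hk a d n)
  obtain ⟨p, hp⟩ : ∃ p, d (n + 1) = p + 1 :=
    ⟨d (n + 1) - 1, by have := hd (n + 1) (by omega); omega⟩
  rw [hp, pw]
  exact List.prefix_append _ _

theorem s_prefix_of_le (k : ℕ) (hk : 2 ≤ k) (a : ℕ → α) (d : ℕ → ℕ)
    (hd : ∀ i, 1 ≤ i → 1 ≤ d i) {m n : ℕ} (h : m ≤ n) : s k a d m <+: s k a d n := by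
  induction n, h using Nat.le_induction with
  | base => exact List.prefix_rfl
  | succ n _ ih => exact ih.trans (s_prefix_succ k hk a d hd n)

theorem s_append_prefix_succ (k : ℕ) (hk : 2 ≤ k) (a : ℕ → α) (d : ℕ → ℕ)
    (hd : ∀ i, 1 ≤ i → 1 ≤ d i) (n : ℕ) (hn : 1 ≤ n) :
    s k a d n ++ s k a d (n - 1) <+: s k a d (n + 1) := by
  refine List.IsPrefix.trans ?_ (pw_append_prefix_s_succ k hk a d hd n hn)
  obtain ⟨p, hp⟩ : ∃ p, d (n + 1) = p + 1 :=
    ⟨d (n + 1) - 1, by have := hd (n + 1) (by omega); omega⟩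
  rw [hp, pw, List.append_assoc]
  refine (List.prefix_append_right_inj _).2 ?_
  cases p with
  | zero => simp [pw]
  | succ p =>
    rw [pw, List.append_assoc]
    exact (s_prefix_of_le k hk a d hd (Nat.sub_le n 1)).trans (List.prefix_append _ _)

/-- In `𝐬`, the prefix `D_n` is followed by the letter `a_{(n mod k)+1}`, already inside `s_{n+1}`. -/
theorem D_letter (k : ℕ) (hk : 2 ≤ k) (a : ℕ → α) (d : ℕ → ℕ) (hd0 : d 0 = 0)
    (hd : ∀ i, 1 ≤ i → 1 ≤ d i) (n : ℕ) :
    D k a d n ++ [a (n % k + 1)] <+: s k a d (n + 1) := by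
  induction n using Nat.strong_induction_on with
  | _ n ih =>
    obtain ⟨p, hp⟩ : ∃ p, d (n + 1) = p + 1 :=
      ⟨d (n + 1) - 1, by have := hd (n + 1) (by omega); omega⟩
    rw [D_eq, hp, Nat.add_sub_cancel, List.append_assoc]
    rcases lt_or_ge n k with h | h
    · rw [← s_small k hk a d hd0 n h, ← pw_succ', ← hp]
      exact pw_prefix_s_succ k hk a d n
    · refine List.IsPrefix.trans ?_ (pw_append_prefix_s_succ k hk a d hd n (by omega))
      rw [E_large k hk a d hd n h, hp, pw_succ']
      simp only [List.append_assoc]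
      refine (List.prefix_append_right_inj _).2 ((List.prefix_append_right_inj _).2 ?_)
      rw [Nat.mod_eq_sub_mod h]
      exact (ih (n - k) (by omega)).trans (s_prefix_of_le k hk a d hd (by omega))

/-- In `𝐬`, the prefix `E n` is followed by the letter `a_{(n mod k)+1}`. -/
theorem E_letter (k : ℕ) (hk : 2 ≤ k) (a : ℕ → α) (d : ℕ → ℕ) (hd0 : d 0 = 0)
    (hd : ∀ i, 1 ≤ i → 1 ≤ d i) (n : ℕ) :
    E k a d n ++ [a (n % k + 1)] <+: s k a d (n + 1) := by
  rcases lt_or_ge n k with h | h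
  · rw [← s_small k hk a d hd0 n h]
    exact s_prefix_succ k hk a d hd n
  · refine List.IsPrefix.trans ?_ (s_append_prefix_succ k hk a d hd n (by omega))
    rw [E_large k hk a d hd n h, List.append_assoc, Nat.mod_eq_sub_mod h]
    exact (List.prefix_append_right_inj _).2
      ((D_letter k hk a d hd0 hd (n - k)).trans (s_prefix_of_le k hk a d hd (by omega)))

theorem E_prefix_sq (k : ℕ) (hk : 2 ≤ k) (a : ℕ → α) (d : ℕ → ℕ) (hd0 : d 0 = 0)
    (hd : ∀ i, 1 ≤ i → 1 ≤ d i) (n : ℕ) :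
    E k a d n <+: s k a d n ++ s k a d n := by
  rcases lt_or_ge n k with h | h
  · conv_rhs => rw [s_small k hk a d hd0 n h]
    simp only [List.append_assoc]
    exact List.prefix_append _ _
  · rw [E_large k hk a d hd n h]
    exact (List.prefix_append_right_inj _).2 ((List.prefix_append _ _).trans
      ((D_letter k hk a d hd0 hd (n - k)).trans (s_prefix_of_le k hk a d hd (by omega))))

theorem map_range_of_prefix {f : ℕ → α} {u v : List α} (h : u <+: v)
    (hv : (List.range v.length).map f = v) : (List.range u.length).map f = u := by
  obtain ⟨t, rfl⟩ := h
  rw [List.length_append, List.range_add, List.map_append] at hv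
  exact (List.append_inj hv (by simp)).1

theorem apply_length_of_prefix {f : ℕ → α} {u v : List α} {x : α} (h : u ++ [x] <+: v)
    (hv : (List.range v.length).map f = v) : f u.length = x := by
  have := map_range_of_prefix h hv
  rw [List.length_append, List.length_singleton, List.range_succ, List.map_append] at this
  simpa using (List.append_inj this (by simp)).2

theorem mod_add_one_ne (k n : ℕ) (hk : 2 ≤ k) : (n + 1) % k ≠ n % k := by
  intro h
  have h1 : n + 1 ≡ n + 0 [MOD k] := h
  have h2 := Nat.ModEq.add_left_cancel' n h1
  have := (Nat.modEq_zero_iff_dvd.1 h2)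
  have := Nat.le_of_dvd one_pos this
  omega

theorem stmt10 {α : Type*} (k : ℕ) (hk : 2 ≤ k) (a : ℕ → α)
    (ha : ∀ i j, 1 ≤ i → i ≤ k → 1 ≤ j → j ≤ k → a i = a j → i = j)
    (d : ℕ → ℕ) (hd0 : d 0 = 0) (hd : ∀ i, 1 ≤ i → 1 ≤ d i)
    (f : ℕ → α) (hf : ∀ N, (List.range (s k a d N).length).map f = s k a d N)
    (n : ℕ) (hn : 1 ≤ n) :
    ((List.range (s k a d n ++ D k a d n).length).map f = s k a d n ++ D k a d n) ∧
    (∃ m, s k a d n ++ D k a d n <+: pw (s k a d n) m) ∧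
    (∀ w : List α, (List.range w.length).map f = w →
        (∃ m, w <+: pw (s k a d n) m) →
        w.length ≤ (s k a d n).length + (D k a d n).length) := by
  have hE := E_letter k hk a d hd0 hd (n + 1)
  rw [E_succ_eq k a d hd] at hE
  have hlt : ∀ i, i % k < k := fun i => Nat.mod_lt i (by omega)
  refine ⟨map_range_of_prefix ((List.prefix_append _ _).trans hE) (hf _), ?_, ?_⟩
  · refine ⟨d (n + 1) + 2, ?_⟩
    rw [← E_succ_eq k a d hd, E_succ, pw_succ', pw_succ', List.append_assoc]
    exact (List.prefix_append_right_inj _).2 (E_prefix_sq k hk a d hd0 hd n)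
  · rintro w hw ⟨m, hm⟩
    by_contra! hlong
    have h1 : f (s k a d n ++ D k a d n).length = a ((n + 1) % k + 1) :=
      apply_length_of_prefix hE (hf _)
    have h2 : f (D k a d n).length = a (n % k + 1) :=
      apply_length_of_prefix (D_letter k hk a d hd0 hd n) (hf _)
    rw [List.length_append] at h1
    have hlen := hm.length_le
    have hget : ∀ i, i < w.length → (pw (s k a d n) m)[i]? = some (f i) := by
      intro i hi
      have e : w[i]? = some (f i) := by
        rw [← hw]; simp [hi]
      obtain ⟨t, ht⟩ := hm
      rw [← ht, List.getElem?_append_left hi, e]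
    have hper := pw_period (s k a d n) m (D k a d n).length (by omega)
    rw [hget _ (by omega), hget _ (by omega), Option.some_inj, add_comm, h1, h2] at hper
    have := ha _ _ (by omega) (hlt (n + 1)) (by omega) (hlt n) hper
    exact mod_add_one_ne k n hk (by omega)

end Epi
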